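/- arXiv:2604.16549 — 2 statements merged into one kernel-verified Lean document; each statement's English description precedes it below -/
import Mathlib

section
/- Let ν, I, K, q₁, g, r be positive reals, α ∈ (0, π/2), set G = π g r sin α, σ = ν/(I K), and ρ = G q₁/(ν K²). Suppose a₁, b₁, ω : ℝ → ℝ are differentiable and solve the reduced waterwheel system ȧ₁ = ω b₁ − K a₁, ḃ₁ = −ω a₁ − K b₁ + q₁, ω̇ = −(ν/I) ω + (G/I) a₁. Define x(τ) = ω(τ/K)/K, y(τ) = G·a₁(τ/K)/(ν K), and z(τ) = ρ − G·b₁(τ/K)/(ν K). Then (x, y, z) is differentiable and solves the Lorenz system x' = σ(y − x), y' = ρx − xz − y, z' = xy − z. -/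
/-!
The time change `t = τ / K` multiplies each derivative by `1 / K`. Substituting the waterwheel
equations into the derivatives of `x`, `y`, `z` leaves three rational identities: the offset `ρ`
in `z` cancels the term `ρ x` in the `y` equation, and the choice `ρ = G q₁ / (ν K²)` absorbs
the inflow `q₁` in the `z` equation.
-/

/-- **Equivalence of the Malkus–Lorenz waterwheel with the Lorenz system.**
If `(a₁, b₁, ω)` solves the reduced waterwheel system, then with
`G = π g r sin α`, `σ = ν/(IK)`, `ρ = G q₁/(ν K²)`, the rescaled variables
`x(τ) = ω(τ/K)/K`, `y(τ) = G a₁(τ/K)/(νK)`, `z(τ) = ρ - G b₁(τ/K)/(νK)`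
are differentiable and solve the Lorenz system
`x' = σ(y - x)`, `y' = ρx - xz - y`, `z' = xy - z`. -/
theorem waterwheel_to_lorenz (ν I K q₁ g r α G σ ρ : ℝ)
    (hν : 0 < ν) (hI : 0 < I) (hK : 0 < K) (hq₁ : 0 < q₁)
    (hg : 0 < g) (hr : 0 < r) (hα : α ∈ Set.Ioo 0 (Real.pi / 2))
    (hG : G = Real.pi * g * r * Real.sin α)
    (hσ : σ = ν / (I * K))
    (hρ : ρ = G * q₁ / (ν * K ^ 2))
    (a₁ b₁ ω : ℝ → ℝ)
    (hda : Differentiable ℝ a₁) (hdb : Differentiable ℝ b₁)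
    (hdω : Differentiable ℝ ω)
    (heqa : ∀ t, deriv a₁ t = ω t * b₁ t - K * a₁ t)
    (heqb : ∀ t, deriv b₁ t = -(ω t) * a₁ t - K * b₁ t + q₁)
    (heqω : ∀ t, deriv ω t = -(ν / I) * ω t + (G / I) * a₁ t)
    (x y z : ℝ → ℝ)
    (hx : x = fun τ => ω (τ / K) / K)
    (hy : y = fun τ => G * a₁ (τ / K) / (ν * K))
    (hz : z = fun τ => ρ - G * b₁ (τ / K) / (ν * K)) :
    Differentiable ℝ x ∧ Differentiable ℝ y ∧ Differentiable ℝ z ∧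
      (∀ τ, deriv x τ = σ * (y τ - x τ)) ∧
      (∀ τ, deriv y τ = ρ * x τ - x τ * z τ - y τ) ∧
      (∀ τ, deriv z τ = x τ * y τ - z τ) := by
  -- The time change `t = τ / K` contributes a factor `1 / K` to every derivative.
  have chain : ∀ f : ℝ → ℝ, Differentiable ℝ f → ∀ τ,
      HasDerivAt (fun τ => f (τ / K)) (deriv f (τ / K) * (1 / K)) τ := fun f hf τ =>
    (hf (τ / K)).hasDerivAt.comp τ ((hasDerivAt_id τ).div_const K)
  have hν0 := hν.ne'
  have hI0 := hI.ne'
  have hK0 := hK.ne'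
  have hx' : ∀ τ, HasDerivAt x (σ * (y τ - x τ)) τ := by
    intro τ
    subst hx hy
    refine HasDerivAt.congr_deriv ((chain ω hdω τ).div_const K) ?_
    rw [heqω, hσ]
    dsimp only
    field_simp
    ring
  have hy' : ∀ τ, HasDerivAt y (ρ * x τ - x τ * z τ - y τ) τ := by
    intro τ
    subst hx hy hz
    refine HasDerivAt.congr_deriv (((chain a₁ hda τ).const_mul G).div_const (ν * K)) ?_
    rw [heqa]
    dsimp only
    field_simp
    ring
  have hz' : ∀ τ, HasDerivAt z (x τ * y τ - z τ) τ := by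
    intro τ
    subst hx hy hz
    refine HasDerivAt.congr_deriv ((((chain b₁ hdb τ).const_mul G).div_const (ν * K)).const_sub ρ) ?_
    rw [heqb, hρ]
    dsimp only
    field_simp
    ring
  exact ⟨fun τ => (hx' τ).differentiableAt, fun τ => (hy' τ).differentiableAt,
    fun τ => (hz' τ).differentiableAt, fun τ => (hx' τ).deriv, fun τ => (hy' τ).deriv,
    fun τ => (hz' τ).deriv⟩
end

section
/- Let σ > 2 and ρ > 1 be real numbers, and consider the polynomial p(λ) = λ³ + (σ+2)λ² + (σ+ρ)λ + 2σ(ρ−1) over ℂ. Then p has a purely imaginary nonzero root (i.e. a root of the form iω with ω ∈ ℝ, ω ≠ 0) if and only if ρ = σ(σ+4)/(σ−2); and in that case the purely imaginary roots are ±i√(σ+ρ). -/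
/-!
On the imaginary axis, `p(iω) = (2σ(ρ-1) - (σ+2)ω²) + iω(σ+ρ-ω²)`. For `ω ≠ 0` the imaginary part
vanishes iff `ω² = σ+ρ`, and the real part then vanishes iff `(σ+2)(σ+ρ) = 2σ(ρ-1)`, which is
`ρ(σ-2) = σ(σ+4)`.
-/

open Complex

/-- **Hopf bifurcation condition for the Lorenz nontrivial fixed points.**
For `σ > 2` and `ρ > 1`, the characteristic polynomial
`p(λ) = λ³ + (σ+2)λ² + (σ+ρ)λ + 2σ(ρ-1)` has a purely imaginary nonzero
root `iω` (with `ω ∈ ℝ, ω ≠ 0`) if and only if `ρ = σ(σ+4)/(σ-2)`;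
in that case the purely imaginary roots are exactly `± i √(σ+ρ)`. -/
theorem lorenz_hopf_condition (σ ρ : ℝ) (hσ : 2 < σ) (hρ : 1 < ρ)
    (p : ℂ → ℂ)
    (hp : p = fun lam => lam ^ 3 + ((σ : ℂ) + 2) * lam ^ 2 +
      ((σ : ℂ) + (ρ : ℂ)) * lam + 2 * (σ : ℂ) * ((ρ : ℂ) - 1)) :
    ((∃ ω : ℝ, ω ≠ 0 ∧ p (Complex.I * (ω : ℂ)) = 0) ↔
        ρ = σ * (σ + 4) / (σ - 2)) ∧
      (ρ = σ * (σ + 4) / (σ - 2) →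
        ∀ ω : ℝ, ω ≠ 0 →
          (p (Complex.I * (ω : ℂ)) = 0 ↔
            ω = Real.sqrt (σ + ρ) ∨ ω = -Real.sqrt (σ + ρ))) := by
  have hroot : ∀ ω : ℝ, ω ≠ 0 →
      (p (Complex.I * (ω : ℂ)) = 0 ↔ ω ^ 2 = σ + ρ ∧ ρ = σ * (σ + 4) / (σ - 2)) := by
    intro ω hω
    have hsplit : p (Complex.I * (ω : ℂ)) =
        ((2 * σ * (ρ - 1) - (σ + 2) * ω ^ 2 : ℝ) : ℂ) +
          ((ω * (σ + ρ - ω ^ 2) : ℝ) : ℂ) * Complex.I := by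
      rw [hp]
      push_cast
      linear_combination ((ω : ℂ) ^ 3 * Complex.I + ((σ : ℂ) + 2) * (ω : ℂ) ^ 2) * Complex.I_sq
    rw [hsplit, Complex.ext_iff, eq_div_iff (sub_pos.mpr hσ).ne']
    simp only [Complex.add_re, Complex.add_im, Complex.ofReal_re, Complex.ofReal_im,
      Complex.re_ofReal_mul, Complex.im_ofReal_mul, Complex.I_re, Complex.I_im, Complex.zero_re,
      Complex.zero_im, mul_zero, mul_one, add_zero, zero_add]
    constructor
    · rintro ⟨hre, him⟩
      have hsq : ω ^ 2 = σ + ρ := by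
        linarith [(mul_eq_zero.mp him).resolve_left hω]
      refine ⟨hsq, ?_⟩
      linear_combination hre + (σ + 2) * hsq
    · rintro ⟨hsq, hc⟩
      constructor
      · linear_combination hc - (σ + 2) * hsq
      · linear_combination -ω * hsq
  have hpos : 0 < σ + ρ := by linarith
  have hsqrt : Real.sqrt (σ + ρ) ^ 2 = σ + ρ := Real.sq_sqrt hpos.le
  refine ⟨⟨?_, ?_⟩, ?_⟩
  · rintro ⟨ω, hω, h⟩
    exact ((hroot ω hω).mp h).2
  · intro hc
    have hne : Real.sqrt (σ + ρ) ≠ 0 := (Real.sqrt_pos.mpr hpos).ne'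
    exact ⟨_, hne, (hroot _ hne).mpr ⟨hsqrt, hc⟩⟩
  · intro hc ω hω
    rw [hroot ω hω, and_iff_left hc, ← sq_eq_sq_iff_eq_or_eq_neg, hsqrt]
end
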